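/- Let Ω ⊂ ℝⁿ be a bounded connected open set whose signed distance function d is C² on a neighborhood of ∂Ω. Assume conditions (reg2), (invariance), (sell), (reg3), with l bounded, and for each λ ∈ (0,1] let u_λ be the unique bounded viscosity solution of λu + H(x,Du,D²u) = 0 in Ω. Then for every h > 0 there exists δ_h > 0 such that for all λ ∈ (0,1] and all x ∈ Ω_{δ_h}: h·log d(x) + min_{Ω∖Ω_{δ_h}} u_λ ≤ u_λ(x) ≤ −h·log d(x) + max_{Ω∖Ω_{δ_h}} u_λ. -/

import Mathlib

open scoped InnerProductSpace Matrix
open Filter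

noncomputable section

/-- The signed distance to the boundary of `Ω`:
`d(x) = dist(x, Ωᶜ) - dist(x, closure Ω)`. -/
def sdist {n : ℕ} (Ω : Set (EuclideanSpace ℝ (Fin n))) (x : EuclideanSpace ℝ (Fin n)) : ℝ :=
  Metric.infDist x Ωᶜ - Metric.infDist x (closure Ω)

/-- The distance to the topological boundary of `Ω`. -/
def bdist {n : ℕ} (Ω : Set (EuclideanSpace ℝ (Fin n))) (x : EuclideanSpace ℝ (Fin n)) : ℝ :=
  Metric.infDist x (frontier Ω)

/-- The Frobenius (Euclidean) norm of a matrix. -/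
def mnorm {n r : ℕ} (M : Matrix (Fin n) (Fin r) ℝ) : ℝ :=
  Real.sqrt (∑ i, ∑ j, M i j ^ 2)

/-- The quadratic form `v ↦ v ⬝ X v`. -/
def quadForm {n : ℕ} (X : Matrix (Fin n) (Fin n) ℝ) (v : EuclideanSpace ℝ (Fin n)) : ℝ :=
  ∑ i, ∑ j, X i j * v i * v j

/-- `Mᵀ v` as a vector in `ℝʳ` (used for `σ(x,α)ᵀ Dd(x)`). -/
def sigmaT {n r : ℕ} (M : Matrix (Fin n) (Fin r) ℝ) (v : EuclideanSpace ℝ (Fin n)) :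
    Fin r → ℝ :=
  Matrix.mulVec Mᵀ (fun i => v i)

/-- The second-order superjet of `u` at `x` relative to `S`. -/
def J2plus {n : ℕ} (S : Set (EuclideanSpace ℝ (Fin n))) (u : EuclideanSpace ℝ (Fin n) → ℝ)
    (x : EuclideanSpace ℝ (Fin n)) :
    Set (EuclideanSpace ℝ (Fin n) × Matrix (Fin n) (Fin n) ℝ) :=
  { pX | pX.2.IsSymm ∧ ∀ ε > (0 : ℝ), ∀ᶠ y in nhdsWithin x S,
      u y - u x - ⟪pX.1, y - x⟫_ℝ - (1 / 2) * quadForm pX.2 (y - x) ≤ ε * ‖y - x‖ ^ 2 }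

/-- The second-order subjet of `u` at `x` relative to `S`: `J^{2,-}u = -J^{2,+}(-u)`. -/
def J2minus {n : ℕ} (S : Set (EuclideanSpace ℝ (Fin n))) (u : EuclideanSpace ℝ (Fin n) → ℝ)
    (x : EuclideanSpace ℝ (Fin n)) :
    Set (EuclideanSpace ℝ (Fin n) × Matrix (Fin n) (Fin n) ℝ) :=
  { qZ | (-qZ.1, -qZ.2) ∈ J2plus S (fun y => -u y) x }

/-- The first-order superdifferential of `u` at `x` relative to `S`. -/
def D1plus {n : ℕ} (S : Set (EuclideanSpace ℝ (Fin n))) (u : EuclideanSpace ℝ (Fin n) → ℝ)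
    (x : EuclideanSpace ℝ (Fin n)) : Set (EuclideanSpace ℝ (Fin n)) :=
  { q | ∀ ε > (0 : ℝ), ∀ᶠ y in nhdsWithin x S, u y - u x - ⟪q, y - x⟫_ℝ ≤ ε * ‖y - x‖ }

/-- The Bellman operator `F(x,p,X) = sup_{α ∈ A} (-b(x,α)·p - tr(σσᵀ X))`. -/
def Fop {n m r : ℕ} (A : Set (Fin m → ℝ))
    (b : EuclideanSpace ℝ (Fin n) → (Fin m → ℝ) → EuclideanSpace ℝ (Fin n))
    (σ : EuclideanSpace ℝ (Fin n) → (Fin m → ℝ) → Matrix (Fin n) (Fin r) ℝ)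
    (x p : EuclideanSpace ℝ (Fin n)) (X : Matrix (Fin n) (Fin n) ℝ) : ℝ :=
  sSup ((fun α => -⟪b x α, p⟫_ℝ - Matrix.trace (σ x α * (σ x α)ᵀ * X)) '' A)

/-- The Hamiltonian `H(x,p,X) = sup_{α ∈ A} (-b(x,α)·p - tr(σσᵀ X) - l(x,α))`. -/
def Hop {n m r : ℕ} (A : Set (Fin m → ℝ))
    (b : EuclideanSpace ℝ (Fin n) → (Fin m → ℝ) → EuclideanSpace ℝ (Fin n))
    (σ : EuclideanSpace ℝ (Fin n) → (Fin m → ℝ) → Matrix (Fin n) (Fin r) ℝ)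
    (l : EuclideanSpace ℝ (Fin n) → (Fin m → ℝ) → ℝ)
    (x p : EuclideanSpace ℝ (Fin n)) (X : Matrix (Fin n) (Fin n) ℝ) : ℝ :=
  sSup ((fun α => -⟪b x α, p⟫_ℝ - Matrix.trace (σ x α * (σ x α)ᵀ * X) - l x α) '' A)

/-- The set of projections of `x` onto `∂Ω`. -/
def projSet {n : ℕ} (Ω : Set (EuclideanSpace ℝ (Fin n))) (x : EuclideanSpace ℝ (Fin n)) :
    Set (EuclideanSpace ℝ (Fin n)) :=
  { z | z ∈ frontier Ω ∧ dist x z = bdist Ω x }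

/-- The interior normal directions at a boundary point `z`. -/
def normalDirs {n : ℕ} (Ω : Set (EuclideanSpace ℝ (Fin n))) (z : EuclideanSpace ℝ (Fin n)) :
    Set (EuclideanSpace ℝ (Fin n)) :=
  { ν | ‖ν‖ = 1 ∧ ∃ x ∈ Ω, x = z + bdist Ω x • ν }


open Topology

lemma aux_tend (k B β γ N : ℝ) (hk : 0 < k) (hβ : β ≤ 1) (hγ : γ < 2 * β - 1) :
    ∃ δ > (0:ℝ), ∀ t, 0 < t → t < δ →
      N ≤ t⁻¹ * (k * t ^ γ) - (t⁻¹)^2 * (B ^ 2 * (t ^ β) ^ 2) := by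
  have h1 : Tendsto (fun t : ℝ => t ^ (γ - 1)) (𝓝[>] 0) atTop :=
    tendsto_rpow_neg_nhdsGT_zero (by linarith)
  have h2 : Tendsto (fun t : ℝ => k - B^2 * t ^ (2*β - 1 - γ)) (𝓝[>] 0) (𝓝 (k - B^2 * 0)) := by
    have : Tendsto (fun t : ℝ => t ^ (2*β - 1 - γ)) (𝓝[>] 0) (𝓝 0) := by
      have h := (Real.continuousAt_rpow_const 0 (2*β - 1 - γ) (Or.inr (by linarith))).tendsto
      rw [Real.zero_rpow (by linarith)] at h
      exact h.mono_left nhdsWithin_le_nhds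
    exact (this.const_mul _).const_sub _
  have h3 := h1.atTop_mul_pos (by simpa using hk) h2
  have h4 := h3.eventually_ge_atTop N
  obtain ⟨δ, hδ, H⟩ := mem_nhdsGT_iff_exists_Ioo_subset.1 h4
  refine ⟨δ, hδ, fun t ht ht' => (H ⟨ht, ht'⟩).trans (le_of_eq ?_)⟩
  have e1 : t ^ (γ - 1) = t⁻¹ * t ^ γ := by
    rw [Real.rpow_sub ht, Real.rpow_one]; field_simp
  have e2 : t ^ (2*β - 1 - γ) = (t ^ β)^2 * t⁻¹ * (t ^ γ)⁻¹ := by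
    rw [Real.rpow_sub ht, Real.rpow_sub ht, Real.rpow_one, mul_comm 2 β, Real.rpow_mul ht.le]
    simp [div_eq_mul_inv]
  have : t ^ γ ≠ 0 := (Real.rpow_pos_of_pos ht γ).ne'
  rw [e1, e2]
  field_simp

lemma aux_taylor {n : ℕ} (f : EuclideanSpace ℝ (Fin n) → ℝ)
    (g : EuclideanSpace ℝ (Fin n) → EuclideanSpace ℝ (Fin n))
    (T : EuclideanSpace ℝ (Fin n) →L[ℝ] EuclideanSpace ℝ (Fin n))
    (x : EuclideanSpace ℝ (Fin n))
    (hf : ∀ᶠ y in 𝓝 x, HasGradientAt f (g y) y) (hg : HasFDerivAt g T x)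
    (ε : ℝ) (hε : 0 < ε) :
    ∀ᶠ y in 𝓝 x, f y - f x - ⟪g x, y - x⟫_ℝ - (1/2) * ⟪T (y - x), y - x⟫_ℝ ≤ ε * ‖y - x‖^2 := by
  have h1 := hg.isLittleO.def hε
  obtain ⟨ρ, hρ, H⟩ := Metric.eventually_nhds_iff_ball.1 (hf.and h1)
  filter_upwards [Metric.ball_mem_nhds x hρ] with y hy
  set w := y - x with hw
  have hmem : ∀ t ∈ Set.Icc (0:ℝ) 1, x + t • w ∈ Metric.ball x ρ := by
    intro t ht
    rw [Metric.mem_ball, dist_eq_norm] at hy ⊢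
    rw [add_sub_cancel_left, norm_smul, Real.norm_of_nonneg ht.1]
    refine lt_of_le_of_lt ?_ hy
    exact mul_le_of_le_one_left (norm_nonneg _) ht.2
  have hline : ∀ t : ℝ, HasDerivAt (fun t : ℝ => x + t • w) w t := by
    intro t
    simpa using ((hasDerivAt_id t).smul_const w).const_add x
  let R : ℝ → ℝ := fun t => f (x + t • w) - t * ⟪g x, w⟫_ℝ - (1/2) * t^2 * ⟪T w, w⟫_ℝ
  have hR : ∀ t ∈ Set.Icc (0:ℝ) 1, HasDerivAt R
      (⟪g (x + t • w), w⟫_ℝ - ⟪g x, w⟫_ℝ - t * ⟪T w, w⟫_ℝ) t := by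
    intro t ht
    have a := ((H _ (hmem t ht)).1.hasFDerivAt.comp_hasDerivAt t (hline t))
    have b := (hasDerivAt_id t).mul_const ⟪g x, w⟫_ℝ
    have c := (((hasDerivAt_id t).pow 2).const_mul (1/2)).mul_const ⟪T w, w⟫_ℝ
    refine ((a.sub b).sub c).congr_deriv ?_
    simp
  have hbd : ∀ t ∈ Set.Icc (0:ℝ) 1,
      ‖⟪g (x + t • w), w⟫_ℝ - ⟪g x, w⟫_ℝ - t * ⟪T w, w⟫_ℝ‖ ≤ ε * ‖w‖^2 := by
    intro t ht
    have := (H _ (hmem t ht)).2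
    rw [add_sub_cancel_left] at this
    have e : ⟪g (x + t • w), w⟫_ℝ - ⟪g x, w⟫_ℝ - t * ⟪T w, w⟫_ℝ
        = ⟪g (x + t • w) - g x - T (t • w), w⟫_ℝ := by
      simp [inner_sub_left, inner_smul_left]
    rw [e]
    refine (norm_inner_le_norm _ _).trans ?_
    have h2 : ‖t • w‖ ≤ ‖w‖ := by
      rw [norm_smul, Real.norm_of_nonneg ht.1]
      exact mul_le_of_le_one_left (norm_nonneg _) ht.2
    calc _ ≤ (ε * ‖w‖) * ‖w‖ := by
          gcongr
          exact this.trans (by gcongr)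
      _ = _ := by ring
  have := (convex_Icc (0:ℝ) 1).norm_image_sub_le_of_norm_hasDerivWithin_le
    (fun t ht => (hR t ht).hasDerivWithinAt) hbd (Set.left_mem_Icc.2 zero_le_one)
    (Set.right_mem_Icc.2 zero_le_one)
  have h5 := (Real.le_norm_self _).trans this
  have e1 : x + w = y := by simp [hw]
  simp only [R, e1, one_smul, zero_smul, add_zero, sub_zero, norm_one, mul_one] at h5
  norm_num at h5 ⊢
  linarith

lemma sdist_of_mem {n : ℕ} {Ω : Set (EuclideanSpace ℝ (Fin n))} {x} (hx : x ∈ closure Ω) :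
    sdist Ω x = Metric.infDist x Ωᶜ := by
  simp [sdist, Metric.infDist_zero_of_mem hx]

lemma sdist_cont {n : ℕ} (Ω : Set (EuclideanSpace ℝ (Fin n))) : Continuous (sdist Ω) :=
  (Metric.continuous_infDist_pt _).sub (Metric.continuous_infDist_pt _)

lemma mem_of_sdist_pos {n : ℕ} {Ω : Set (EuclideanSpace ℝ (Fin n))} {x}
    (hx : 0 < sdist Ω x) : x ∈ Ω := by
  by_contra h
  have h1 : Metric.infDist x Ωᶜ = 0 := Metric.infDist_zero_of_mem h
  have h2 := Metric.infDist_nonneg (x := x) (s := closure Ω)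
  unfold sdist at hx
  linarith

lemma sdist_pos {n : ℕ} {Ω : Set (EuclideanSpace ℝ (Fin n))} (ho : IsOpen Ω)
    (hne : (Ωᶜ).Nonempty) {x} (hx : x ∈ Ω) : 0 < sdist Ω x := by
  rw [sdist_of_mem (subset_closure hx)]
  refine (ho.isClosed_compl.notMem_iff_infDist_pos hne).1 (by simpa using hx)

lemma proj_exists {n : ℕ} {Ω : Set (EuclideanSpace ℝ (Fin n))} (ho : IsOpen Ω)
    (hne : (Ωᶜ).Nonempty) {x} (hx : x ∈ Ω) : ∃ z ∈ frontier Ω, ‖x - z‖ = sdist Ω x ∧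
      ∀ t ∈ Set.Icc (0:ℝ) 1, sdist Ω (z + t • (x - z)) = t * sdist Ω x := by
  obtain ⟨z, hz, hd⟩ := ho.isClosed_compl.exists_infDist_eq_dist hne x
  have hp := sdist_pos ho hne hx
  have hs := sdist_of_mem (subset_closure hx)
  have hball : Metric.ball x (sdist Ω x) ⊆ Ω := by
    rw [hs]; intro y hy
    by_contra h
    have := Metric.infDist_le_dist_of_mem (x := x) (s := Ωᶜ) h
    rw [Metric.mem_ball, dist_comm] at hy
    linarith
  have hcb : Metric.closedBall x (sdist Ω x) ⊆ closure Ω := by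
    rw [← closure_ball x hp.ne']; exact closure_mono hball
  have hzc : z ∈ closure Ω := hcb (by rw [Metric.mem_closedBall, dist_comm, hs, hd])
  have hn : ‖x - z‖ = sdist Ω x := by rw [← dist_eq_norm, hs, hd]
  refine ⟨z, ⟨hzc, by rw [ho.interior_eq]; exact hz⟩, hn, fun t ht => ?_⟩
  have hxy : dist x (z + t • (x - z)) = (1 - t) * sdist Ω x := by
    rw [dist_eq_norm, ← hn, show x - (z + t • (x - z)) = (1 - t) • (x - z) by module, norm_smul,
      Real.norm_of_nonneg (by linarith [ht.2])]
  have hyz : dist (z + t • (x - z)) z = t * sdist Ω x := by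
    rw [dist_eq_norm, ← hn, add_sub_cancel_left, norm_smul, Real.norm_of_nonneg ht.1]
  have hyc : z + t • (x - z) ∈ closure Ω := hcb (by
    rw [Metric.mem_closedBall, dist_comm, hxy]; nlinarith [ht.1])
  rw [sdist_of_mem hyc]
  have h1 := Metric.infDist_le_dist_of_mem (x := z + t • (x - z)) (s := Ωᶜ) hz
  have h2 := Metric.infDist_le_infDist_add_dist (s := Ωᶜ) (x := x) (y := z + t • (x - z))
  rw [← hs, hxy] at h2
  rw [hyz] at h1
  linarith

lemma grad_eq {n : ℕ} {Ω : Set (EuclideanSpace ℝ (Fin n))} {x z p : EuclideanSpace ℝ (Fin n)}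
    (hp : 0 < sdist Ω x) (hn : ‖x - z‖ = sdist Ω x)
    (hl : ∀ t ∈ Set.Icc (0:ℝ) 1, sdist Ω (z + t • (x - z)) = t * sdist Ω x)
    {s : ℝ} (hs : s ∈ Set.Icc (0:ℝ) 1) (hg : HasGradientAt (sdist Ω) p (z + s • (x - z)))
    (h1 : ‖p‖ = 1) : sdist Ω x • p = x - z := by
  have hline : HasDerivAt (fun t : ℝ => z + t • (x - z)) (x - z) s := by
    simpa using ((hasDerivAt_id s).smul_const (x - z)).const_add z
  have a := (hg.hasFDerivAt.comp_hasDerivAt s hline).hasDerivWithinAt (s := Set.Icc (0:ℝ) 1)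
  have b : HasDerivWithinAt (fun t : ℝ => t * sdist Ω x) (sdist Ω x) (Set.Icc (0:ℝ) 1) s := by
    simpa using ((hasDerivAt_id s).mul_const (sdist Ω x)).hasDerivWithinAt
  have b' := b.congr (f₁ := sdist Ω ∘ fun t : ℝ => z + t • (x - z)) (fun t ht => hl t ht) (hl s hs)
  have e := (uniqueDiffOn_Icc (zero_lt_one' ℝ) s hs).eq_deriv _ a b'
  simp only [InnerProductSpace.toDual_apply_apply] at e
  rw [← sub_eq_zero, ← norm_eq_zero]
  have : ‖sdist Ω x • p - (x - z)‖^2 = 0 := by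
    rw [norm_sub_sq_real, norm_smul, inner_smul_left, e, hn, h1, Real.norm_of_nonneg hp.le]
    simp; ring
  simpa using this

lemma sigmaT_bound {n r : ℕ} (M : Matrix (Fin n) (Fin r) ℝ) (p : EuclideanSpace ℝ (Fin n)) :
    ∑ j, sigmaT M p j ^ 2 ≤ mnorm M ^ 2 * ‖p‖ ^ 2 := by
  unfold mnorm
  rw [Real.sq_sqrt (by positivity), EuclideanSpace.real_norm_sq_eq, Finset.sum_comm, Finset.sum_mul]
  refine Finset.sum_le_sum fun j _ => ?_
  exact Finset.sum_mul_sq_le_sq_mul_sq Finset.univ (fun i => M i j) (fun i => p i)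

lemma sigmaT_sub {n r : ℕ} (M N : Matrix (Fin n) (Fin r) ℝ) (p : EuclideanSpace ℝ (Fin n)) :
    sigmaT (M - N) p = sigmaT M p - sigmaT N p := by
  simp [sigmaT, Matrix.transpose_sub, Matrix.sub_mulVec]

lemma trace_outer {n r : ℕ} (M : Matrix (Fin n) (Fin r) ℝ) (p : EuclideanSpace ℝ (Fin n)) :
    Matrix.trace (M * Mᵀ * Matrix.vecMulVec (fun i => p i) (fun i => p i))
      = ∑ j, sigmaT M p j ^ 2 := by
  rw [Matrix.mul_vecMulVec, Matrix.trace_vecMulVec, ← Matrix.mulVec_mulVec, dotProduct_comm,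
    Matrix.dotProduct_mulVec, ← Matrix.mulVec_transpose]
  simp [dotProduct, sigmaT, sq]

lemma quad_inner {n : ℕ} (X : Matrix (Fin n) (Fin n) ℝ) (v : EuclideanSpace ℝ (Fin n)) :
    quadForm X v = ⟪Matrix.toEuclideanLin X v, v⟫_ℝ := by
  simp only [quadForm, PiLp.inner_apply, Matrix.toEuclideanLin_apply, Matrix.mulVec, dotProduct]
  refine Finset.sum_congr rfl fun i _ => ?_
  simp [Finset.mul_sum]
  exact Finset.sum_congr rfl fun j _ => by ring

lemma quad_outer {n : ℕ} (p v : EuclideanSpace ℝ (Fin n)) :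
    quadForm (Matrix.vecMulVec (fun i => p i) (fun i => p i)) v = ⟪p, v⟫_ℝ ^ 2 := by
  simp only [quadForm, PiLp.inner_apply, Matrix.vecMulVec_apply, sq, Finset.sum_mul_sum]
  refine Finset.sum_congr rfl fun i _ => Finset.sum_congr rfl fun j _ => by simp; ring

lemma quad_lin {n : ℕ} (X Y : Matrix (Fin n) (Fin n) ℝ) (c e : ℝ) (v : EuclideanSpace ℝ (Fin n)) :
    quadForm (c • X + e • Y) v = c * quadForm X v + e * quadForm Y v := by
  simp only [quadForm, Finset.mul_sum, ← Finset.sum_add_distrib]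
  refine Finset.sum_congr rfl fun i _ => Finset.sum_congr rfl fun j _ => by simp; ring

lemma D2_symm {n : ℕ} (f : EuclideanSpace ℝ (Fin n) → ℝ)
    (g : EuclideanSpace ℝ (Fin n) → EuclideanSpace ℝ (Fin n))
    (X : Matrix (Fin n) (Fin n) ℝ) (x : EuclideanSpace ℝ (Fin n))
    (hf : ∀ᶠ y in 𝓝 x, HasGradientAt f (g y) y)
    (hg : HasFDerivAt g (LinearMap.toContinuousLinearMap (Matrix.toEuclideanLin X)) x) :
    X.IsSymm := by
  have h1 : ∀ᶠ y in 𝓝 x, HasFDerivAt f (innerSL ℝ (g y)) y := by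
    filter_upwards [hf] with y hy
    exact hy.hasFDerivAt
  have h2 : HasFDerivAt (fun y => innerSL ℝ (g y)) _ x :=
    ((innerSL ℝ (E := EuclideanSpace ℝ (Fin n))).hasFDerivAt.comp x hg)
  ext i j
  have := second_derivative_symmetric_of_eventually h1 h2
    (EuclideanSpace.single i 1) (EuclideanSpace.single j 1)
  change ⟪Matrix.toEuclideanLin X (EuclideanSpace.single i 1), EuclideanSpace.single j 1⟫_ℝ
    = ⟪Matrix.toEuclideanLin X (EuclideanSpace.single j 1), EuclideanSpace.single i 1⟫_ℝ at this
  simpa [EuclideanSpace.inner_single_right] using this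

lemma jet_mem {n : ℕ} {Ω : Set (EuclideanSpace ℝ (Fin n))} {δ₀ : ℝ}
    (Dd : EuclideanSpace ℝ (Fin n) → EuclideanSpace ℝ (Fin n))
    (D2d : EuclideanSpace ℝ (Fin n) → Matrix (Fin n) (Fin n) ℝ)
    (hDd : ∀ x, |sdist Ω x| < δ₀ → HasGradientAt (sdist Ω) (Dd x) x)
    (hD2d : ∀ x, |sdist Ω x| < δ₀ →
      HasFDerivAt Dd (LinearMap.toContinuousLinearMap (Matrix.toEuclideanLin (D2d x))) x)
    (v : EuclideanSpace ℝ (Fin n) → ℝ) (x : EuclideanSpace ℝ (Fin n)) (h : ℝ)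
    (hx : 0 < sdist Ω x) (hx' : sdist Ω x < δ₀)
    (hmax : ∀ᶠ y in 𝓝 x, v y + h * Real.log (sdist Ω y) ≤ v x + h * Real.log (sdist Ω x)) :
    ((-h * (sdist Ω x)⁻¹) • Dd x,
      (h * ((sdist Ω x)⁻¹)^2) • Matrix.vecMulVec (fun i => Dd x i) (fun i => Dd x i)
        + (-h * (sdist Ω x)⁻¹) • D2d x) ∈ J2plus Ω v x := by
  have hev : ∀ᶠ y in 𝓝 x, 0 < sdist Ω y ∧ sdist Ω y < δ₀ :=
    ((sdist_cont Ω).continuousAt.eventually (lt_mem_nhds hx)).and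
      ((sdist_cont Ω).continuousAt.eventually (gt_mem_nhds hx'))
  have habs : ∀ y, 0 < sdist Ω y ∧ sdist Ω y < δ₀ → |sdist Ω y| < δ₀ := by
    intro y hy; rw [abs_of_pos hy.1]; exact hy.2
  have hgrad : ∀ᶠ y in 𝓝 x, HasGradientAt (sdist Ω) (Dd y) y := by
    filter_upwards [hev] with y hy using hDd y (habs y hy)
  have hsym := D2_symm _ _ _ x hgrad (hD2d x (habs x ⟨hx, hx'⟩))
  have hgrad2 : ∀ᶠ y in 𝓝 x, HasGradientAt (fun y => -h * Real.log (sdist Ω y))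
      ((-h * (sdist Ω y)⁻¹) • Dd y) y := by
    filter_upwards [hev] with y hy
    have := ((hDd y (habs y hy)).hasFDerivAt.log hy.1.ne').const_mul (-h)
    rw [hasGradientAt_iff_hasFDerivAt]
    refine this.congr_fderiv ?_
    ext w
    simp
    ring
  have hc : HasFDerivAt (fun y => -h * (sdist Ω y)⁻¹) _ x :=
    ((hasDerivAt_inv hx.ne').comp_hasFDerivAt x (hDd x (habs x ⟨hx, hx'⟩)).hasFDerivAt).const_mul (-h)
  have hg2 := hc.smul (hD2d x (habs x ⟨hx, hx'⟩))
  refine ⟨?_, fun ε hε => ?_⟩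
  · ext i j
    have := congrFun (congrFun hsym i) j
    simp only [Matrix.transpose_apply] at this
    simp only [Matrix.transpose_apply, Matrix.add_apply, Matrix.smul_apply,
      Matrix.vecMulVec_apply, this, smul_eq_mul]
    ring
  · have := aux_taylor _ _ _ x hgrad2 hg2 ε hε
    refine Filter.Eventually.filter_mono nhdsWithin_le_nhds ?_
    filter_upwards [this, hmax] with y h1 h2
    have e : quadForm ((h * ((sdist Ω x)⁻¹)^2) • Matrix.vecMulVec (fun i => Dd x i) (fun i => Dd x i)
        + (-h * (sdist Ω x)⁻¹) • D2d x) (y - x) = 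
        h * ((sdist Ω x)⁻¹)^2 * ⟪Dd x, y - x⟫_ℝ ^ 2
          + (-h * (sdist Ω x)⁻¹) * ⟪Matrix.toEuclideanLin (D2d x) (y - x), y - x⟫_ℝ := by
      rw [quad_lin, quad_inner (D2d x), quad_outer]
    simp only [e]
    simp only [ContinuousLinearMap.add_apply, ContinuousLinearMap.smul_apply,
      ContinuousLinearMap.smulRight_apply, inner_add_left, inner_smul_left,
      LinearMap.coe_toContinuousLinearMap', InnerProductSpace.toDual_apply_apply] at h1
    simp only [smul_eq_mul, conj_trivial] at h1
    simp only [inner_smul_left, conj_trivial]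
    have e3 : (sdist Ω x ^ 2)⁻¹ = ((sdist Ω x)⁻¹)^2 := by rw [inv_pow]
    rw [e3] at h1
    nlinarith [h1, h2]

/-- One-sided viscosity inequality with the running cost replaced by its bound. -/
def SubP {n m r : ℕ} (Ω : Set (EuclideanSpace ℝ (Fin n))) (A : Set (Fin m → ℝ))
    (b : EuclideanSpace ℝ (Fin n) → (Fin m → ℝ) → EuclideanSpace ℝ (Fin n))
    (σ : EuclideanSpace ℝ (Fin n) → (Fin m → ℝ) → Matrix (Fin n) (Fin r) ℝ)
    (C lam : ℝ) (v : EuclideanSpace ℝ (Fin n) → ℝ) : Prop :=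
  ∀ x ∈ Ω, ∀ pX ∈ J2plus Ω v x, ∀ S : ℝ,
    (∀ α ∈ A, S ≤ -⟪b x α, pX.1⟫_ℝ - Matrix.trace (σ x α * (σ x α)ᵀ * pX.2)) → lam * v x + S ≤ C

lemma entry_le {n r : ℕ} (M : Matrix (Fin n) (Fin r) ℝ) (i j) : |M i j| ≤ mnorm M := by
  unfold mnorm
  refine Real.abs_le_sqrt ?_
  calc M i j ^ 2 ≤ ∑ j, M i j ^ 2 :=
        Finset.single_le_sum (f := fun j => M i j ^ 2) (fun _ _ => sq_nonneg _) (Finset.mem_univ j)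
    _ ≤ _ := Finset.single_le_sum (f := fun i => ∑ j, M i j ^ 2)
        (fun _ _ => Finset.sum_nonneg fun _ _ => sq_nonneg _) (Finset.mem_univ i)

lemma trace_bound {n r : ℕ} (M : Matrix (Fin n) (Fin r) ℝ) (X : Matrix (Fin n) (Fin n) ℝ) (C : ℝ)
    (hM : mnorm M ≤ C) :
    |Matrix.trace (M * Mᵀ * X)| ≤ ∑ i, ∑ k, (∑ _j : Fin r, C * C) * |X k i| := by
  have hC : 0 ≤ C := (Real.sqrt_nonneg _).trans hM
  simp only [Matrix.trace, Matrix.diag, Matrix.mul_apply, Matrix.transpose_apply]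
  refine (Finset.abs_sum_le_sum_abs _ _).trans (Finset.sum_le_sum fun i _ => ?_)
  refine (Finset.abs_sum_le_sum_abs _ _).trans (Finset.sum_le_sum fun k _ => ?_)
  rw [abs_mul]
  refine mul_le_mul_of_nonneg_right ?_ (abs_nonneg _)
  refine (Finset.abs_sum_le_sum_abs _ _).trans (Finset.sum_le_sum fun j _ => ?_)
  rw [abs_mul]
  exact mul_le_mul ((entry_le M i j).trans hM) ((entry_le M k j).trans hM) (abs_nonneg _) hC

lemma subP_of_sub {n m r : ℕ} (Ω : Set (EuclideanSpace ℝ (Fin n))) (A : Set (Fin m → ℝ))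
    (hAne : A.Nonempty)
    (b : EuclideanSpace ℝ (Fin n) → (Fin m → ℝ) → EuclideanSpace ℝ (Fin n))
    (σ : EuclideanSpace ℝ (Fin n) → (Fin m → ℝ) → Matrix (Fin n) (Fin r) ℝ)
    (hbBdd : ∃ C, ∀ x ∈ closure Ω, ∀ α ∈ A, ‖b x α‖ ≤ C)
    (hσBdd : ∃ C, ∀ x ∈ closure Ω, ∀ α ∈ A, mnorm (σ x α) ≤ C)
    (l : EuclideanSpace ℝ (Fin n) → (Fin m → ℝ) → ℝ) (C : ℝ)
    (hl : ∀ x ∈ closure Ω, ∀ α ∈ A, |l x α| ≤ C) (lam : ℝ) (v : EuclideanSpace ℝ (Fin n) → ℝ)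
    (hv : ∀ x ∈ Ω, ∀ pX ∈ J2plus Ω v x, lam * v x + Hop A b σ l x pX.1 pX.2 ≤ 0) :
    SubP Ω A b σ C lam v := by
  intro x hx pX hpX S hS
  have h1 := hv x hx pX hpX
  obtain ⟨Cb, hCb⟩ := hbBdd
  obtain ⟨Cs, hCs⟩ := hσBdd
  have hxc := subset_closure hx
  have hbdd : BddAbove ((fun α => -⟪b x α, pX.1⟫_ℝ - Matrix.trace (σ x α * (σ x α)ᵀ * pX.2)
      - l x α) '' A) := by
    refine ⟨Cb * ‖pX.1‖ + (∑ i, ∑ k, (∑ _j : Fin r, Cs * Cs) * |pX.2 k i|) + C, ?_⟩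
    rintro _ ⟨α, hα, rfl⟩
    have a1 := (abs_le.1 (trace_bound (σ x α) pX.2 Cs (hCs x hxc α hα))).1
    have a2 := (abs_le.1 (hl x hxc α hα)).1
    have a3 := (abs_le.1 (abs_real_inner_le_norm (b x α) pX.1)).1
    have a4 : ‖b x α‖ * ‖pX.1‖ ≤ Cb * ‖pX.1‖ :=
      mul_le_mul_of_nonneg_right (hCb x hxc α hα) (norm_nonneg _)
    dsimp only
    linarith
  obtain ⟨α, hα⟩ := hAne
  have h2 := le_csSup hbdd ⟨α, hα, rfl⟩
  have h3 := hS α hα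
  have h4 := (abs_le.1 (hl x hxc α hα)).2
  unfold Hop at h1
  dsimp only at h2
  linarith

lemma subP_of_super {n m r : ℕ} (Ω : Set (EuclideanSpace ℝ (Fin n))) (A : Set (Fin m → ℝ))
    (hAne : A.Nonempty)
    (b : EuclideanSpace ℝ (Fin n) → (Fin m → ℝ) → EuclideanSpace ℝ (Fin n))
    (σ : EuclideanSpace ℝ (Fin n) → (Fin m → ℝ) → Matrix (Fin n) (Fin r) ℝ)
    (l : EuclideanSpace ℝ (Fin n) → (Fin m → ℝ) → ℝ) (C : ℝ)
    (hl : ∀ x ∈ closure Ω, ∀ α ∈ A, |l x α| ≤ C) (lam : ℝ) (v : EuclideanSpace ℝ (Fin n) → ℝ)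
    (hv : ∀ x ∈ Ω, ∀ qZ ∈ J2minus Ω v x, 0 ≤ lam * v x + Hop A b σ l x qZ.1 qZ.2) :
    SubP Ω A b σ C lam (fun y => - v y) := by
  intro x hx pX hpX S hS
  have h1 := hv x hx (-pX.1, -pX.2) (by simpa [J2minus] using hpX)
  have hxc := subset_closure hx
  have h2 : Hop A b σ l x (-pX.1) (-pX.2) ≤ -S + C := by
    refine csSup_le (hAne.image _) ?_
    rintro _ ⟨α, hα, rfl⟩
    have h3 := hS α hα
    have h4 := (abs_le.1 (hl x hxc α hα)).1
    simp only [inner_neg_right, Matrix.mul_neg, Matrix.trace_neg]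
    linarith
  dsimp only at h1 ⊢
  linarith

lemma log_max {n m r : ℕ} {Ω : Set (EuclideanSpace ℝ (Fin n))} (hΩo : IsOpen Ω)
    (hΩbdd : Bornology.IsBounded Ω) (hne : (Ωᶜ).Nonempty)
    {A : Set (Fin m → ℝ)}
    {b : EuclideanSpace ℝ (Fin n) → (Fin m → ℝ) → EuclideanSpace ℝ (Fin n)}
    {σ : EuclideanSpace ℝ (Fin n) → (Fin m → ℝ) → Matrix (Fin n) (Fin r) ℝ}
    {δ₀ : ℝ}
    (Dd : EuclideanSpace ℝ (Fin n) → EuclideanSpace ℝ (Fin n))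
    (D2d : EuclideanSpace ℝ (Fin n) → Matrix (Fin n) (Fin n) ℝ)
    (hDd : ∀ x, |sdist Ω x| < δ₀ → HasGradientAt (sdist Ω) (Dd x) x)
    (hD2d : ∀ x, |sdist Ω x| < δ₀ →
      HasFDerivAt Dd (LinearMap.toContinuousLinearMap (Matrix.toEuclideanLin (D2d x))) x)
    {N δ : ℝ} (hδ₀ : δ ≤ δ₀) (hδ1 : δ ≤ 1)
    (hN : ∀ x ∈ Ω, sdist Ω x < δ → ∀ α ∈ A,
      N ≤ (sdist Ω x)⁻¹ * (⟪b x α, Dd x⟫_ℝ + Matrix.trace (σ x α * (σ x α)ᵀ * D2d x))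
        - ((sdist Ω x)⁻¹)^2 * ∑ j, sigmaT (σ x α) (Dd x) j ^ 2)
    {C lam : ℝ} {v : EuclideanSpace ℝ (Fin n) → ℝ} (hv : SubP Ω A b σ C lam v)
    (hc : ContinuousOn v Ω) {M : ℝ} (hM : ∀ x ∈ Ω, v x ≤ M)
    {h : ℝ} (hh : 0 < h) {x : EuclideanSpace ℝ (Fin n)} (hx : x ∈ Ω) (hxδ : sdist Ω x < δ) :
    ∃ x₀ ∈ Ω, v x + h * Real.log (sdist Ω x) ≤ v x₀ + h * Real.log (sdist Ω x₀) ∧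
      sdist Ω x₀ ≤ 1 ∧ (δ ≤ sdist Ω x₀ ∨ lam * v x₀ + h * N ≤ C) := by
  have hxp := sdist_pos hΩo hne hx
  -- a lower cutoff
  have hlim : Tendsto (fun t : ℝ => M + h * Real.log t) (𝓝[>] 0) atBot :=
    tendsto_atBot_add_const_left _ _ (Real.tendsto_log_nhdsGT_zero.const_mul_atBot hh)
  have hev := (hlim.eventually_lt_atBot (v x + h * Real.log (sdist Ω x))).and
    (Ioo_mem_nhdsGT hxp)
  obtain ⟨η, hη1, hη0, hηx⟩ := hev.exists
  let K : Set (EuclideanSpace ℝ (Fin n)) := {y | η ≤ sdist Ω y ∧ sdist Ω y ≤ δ}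
  have hKΩ : K ⊆ Ω := fun y hy => mem_of_sdist_pos (hη0.trans_le hy.1)
  have hKc : IsCompact K := by
    refine Metric.isCompact_of_isClosed_isBounded ?_ (hΩbdd.subset hKΩ)
    exact (isClosed_le continuous_const (sdist_cont Ω)).inter
      (isClosed_le (sdist_cont Ω) continuous_const)
  have hcont : ContinuousOn (fun y => v y + h * Real.log (sdist Ω y)) K := by
    refine (hc.mono hKΩ).add (continuousOn_const.mul ?_)
    exact (sdist_cont Ω).continuousOn.log fun y hy => (hη0.trans_le hy.1).ne'
  have hxK : x ∈ K := ⟨hηx.le, hxδ.le⟩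
  obtain ⟨x₀, hx₀, hmax⟩ := hKc.exists_isMaxOn ⟨x, hxK⟩ hcont
  have hx₀p : 0 < sdist Ω x₀ := hη0.trans_le hx₀.1
  have hxx₀ : v x + h * Real.log (sdist Ω x) ≤ v x₀ + h * Real.log (sdist Ω x₀) := hmax hxK
  refine ⟨x₀, hKΩ hx₀, hxx₀, hx₀.2.trans hδ1, ?_⟩
  by_cases hcase : δ ≤ sdist Ω x₀
  · exact Or.inl hcase
  right
  push Not at hcase
  have hloc : ∀ᶠ y in 𝓝 x₀,
      v y + h * Real.log (sdist Ω y) ≤ v x₀ + h * Real.log (sdist Ω x₀) := by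
    filter_upwards [(sdist_cont Ω).continuousAt.eventually (lt_mem_nhds hx₀p),
      (sdist_cont Ω).continuousAt.eventually (gt_mem_nhds hcase)] with y h1 h2
    by_cases hy : η ≤ sdist Ω y
    · exact hmax (show y ∈ K from ⟨hy, le_of_lt h2⟩)
    · push Not at hy
      have h3 := hM y (mem_of_sdist_pos h1)
      have h4 := Real.log_le_log h1 hy.le
      have h5 := mul_le_mul_of_nonneg_left h4 hh.le
      linarith
  have hjet := jet_mem Dd D2d hDd hD2d v x₀ h hx₀p (hcase.trans_le hδ₀) hloc
  refine hv x₀ (hKΩ hx₀) _ hjet _ fun α hα => ?_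
  have h1 := mul_le_mul_of_nonneg_left (hN x₀ (hKΩ hx₀) hcase α hα) hh.le
  refine h1.trans (le_of_eq ?_)
  dsimp only
  rw [Matrix.mul_add, Matrix.trace_add, Matrix.mul_smul, Matrix.mul_smul, Matrix.trace_smul,
    Matrix.trace_smul, trace_outer, inner_smul_right, smul_eq_mul, smul_eq_mul]
  ring

lemma const_jet {n : ℕ} {Ω : Set (EuclideanSpace ℝ (Fin n))} {v : EuclideanSpace ℝ (Fin n) → ℝ}
    {x : EuclideanSpace ℝ (Fin n)} (h : ∀ y ∈ Ω, v y ≤ v x) : ((0 : EuclideanSpace ℝ (Fin n)),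
      (0 : Matrix (Fin n) (Fin n) ℝ)) ∈ J2plus Ω v x := by
  refine ⟨Matrix.isSymm_zero, fun ε hε => ?_⟩
  filter_upwards [self_mem_nhdsWithin] with y hy
  have := h y hy
  have h2 : 0 ≤ ε * ‖y - x‖^2 := by positivity
  simp [quadForm]
  linarith

lemma global_bound {n m r : ℕ} {Ω : Set (EuclideanSpace ℝ (Fin n))} (hΩo : IsOpen Ω)
    (hΩbdd : Bornology.IsBounded Ω) (hne : (Ωᶜ).Nonempty)
    {A : Set (Fin m → ℝ)}
    {b : EuclideanSpace ℝ (Fin n) → (Fin m → ℝ) → EuclideanSpace ℝ (Fin n)}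
    {σ : EuclideanSpace ℝ (Fin n) → (Fin m → ℝ) → Matrix (Fin n) (Fin r) ℝ}
    {δ₀ : ℝ}
    (Dd : EuclideanSpace ℝ (Fin n) → EuclideanSpace ℝ (Fin n))
    (D2d : EuclideanSpace ℝ (Fin n) → Matrix (Fin n) (Fin n) ℝ)
    (hDd : ∀ x, |sdist Ω x| < δ₀ → HasGradientAt (sdist Ω) (Dd x) x)
    (hD2d : ∀ x, |sdist Ω x| < δ₀ →
      HasFDerivAt Dd (LinearMap.toContinuousLinearMap (Matrix.toEuclideanLin (D2d x))) x)
    {N δ : ℝ} (hδ : 0 < δ) (hδ₀ : δ ≤ δ₀) (hδ1 : δ ≤ 1) (hN0 : 0 ≤ N)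
    (hN : ∀ x ∈ Ω, sdist Ω x < δ → ∀ α ∈ A,
      N ≤ (sdist Ω x)⁻¹ * (⟪b x α, Dd x⟫_ℝ + Matrix.trace (σ x α * (σ x α)ᵀ * D2d x))
        - ((sdist Ω x)⁻¹)^2 * ∑ j, sigmaT (σ x α) (Dd x) j ^ 2)
    (hKne : ∃ y ∈ Ω, δ ≤ sdist Ω y)
    {C lam : ℝ} (hlam : 0 < lam) {v : EuclideanSpace ℝ (Fin n) → ℝ} (hv : SubP Ω A b σ C lam v)
    (hc : ContinuousOn v Ω) {M : ℝ} (hM : ∀ x ∈ Ω, v x ≤ M) :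
    ∀ x ∈ Ω, lam * v x ≤ C := by
  let K : Set (EuclideanSpace ℝ (Fin n)) := {y | δ ≤ sdist Ω y}
  have hKΩ : K ⊆ Ω := fun y hy => mem_of_sdist_pos (hδ.trans_le hy)
  have hKc : IsCompact K := by
    refine Metric.isCompact_of_isClosed_isBounded ?_ (hΩbdd.subset hKΩ)
    exact isClosed_le continuous_const (sdist_cont Ω)
  obtain ⟨y₁, hy₁, hy₁'⟩ := hKne
  obtain ⟨y₀, hy₀, hmax⟩ := hKc.exists_isMaxOn ⟨y₁, hy₁'⟩ (hc.mono hKΩ)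
  have key : ∀ x ∈ Ω, v x ≤ max (v y₀) (C / lam) := by
    intro x hx
    by_cases hxδ : δ ≤ sdist Ω x
    · exact (hmax (show x ∈ K from hxδ)).trans (le_max_left _ _)
    push Not at hxδ
    have hev : ∀ h > (0:ℝ), v x + h * Real.log (sdist Ω x) ≤ max (v y₀) (C / lam) := by
      intro h hh
      obtain ⟨x₀, hx₀, h1, h2, h3⟩ := log_max hΩo hΩbdd hne Dd D2d hDd hD2d hδ₀ hδ1 hN hv hc hM hh
        hx hxδ
      have h4 := Real.log_nonpos (sdist_pos hΩo hne hx₀).le h2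
      have h5 : h * Real.log (sdist Ω x₀) ≤ 0 := mul_nonpos_of_nonneg_of_nonpos hh.le h4
      have h6 : v x₀ ≤ max (v y₀) (C / lam) := by
        rcases h3 with h3 | h3
        · exact (hmax (show x₀ ∈ K from h3)).trans (le_max_left _ _)
        · refine le_trans ?_ (le_max_right _ _)
          rw [le_div_iff₀ hlam]
          have := mul_nonneg hh.le hN0
          linarith
      linarith
    have ht : Tendsto (fun h : ℝ => v x + h * Real.log (sdist Ω x)) (𝓝[>] 0)
        (𝓝 (v x + 0 * Real.log (sdist Ω x))) := by
      refine Tendsto.mono_left ?_ nhdsWithin_le_nhds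
      exact (Continuous.tendsto (by fun_prop) 0)
    have := le_of_tendsto ht (eventually_mem_nhdsWithin.mono hev)
    simpa using this
  intro x hx
  rcases le_total (v y₀) (C / lam) with hle | hle
  · have := key x hx
    rw [max_eq_right hle, le_div_iff₀ hlam] at this
    linarith
  · have h1 : ∀ y ∈ Ω, v y ≤ v y₀ := fun y hy => by simpa [hle] using key y hy
    have h2 := hv y₀ (hKΩ hy₀) _ (const_jet h1) 0 (fun α hα => by simp)
    have h3 := mul_le_mul_of_nonneg_left (h1 x hx) hlam.le
    linarith

lemma upper {n m r : ℕ} {Ω : Set (EuclideanSpace ℝ (Fin n))} (hΩo : IsOpen Ω)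
    (hΩbdd : Bornology.IsBounded Ω) (hne : (Ωᶜ).Nonempty)
    {A : Set (Fin m → ℝ)}
    {b : EuclideanSpace ℝ (Fin n) → (Fin m → ℝ) → EuclideanSpace ℝ (Fin n)}
    {σ : EuclideanSpace ℝ (Fin n) → (Fin m → ℝ) → Matrix (Fin n) (Fin r) ℝ}
    {δ₀ : ℝ}
    (Dd : EuclideanSpace ℝ (Fin n) → EuclideanSpace ℝ (Fin n))
    (D2d : EuclideanSpace ℝ (Fin n) → Matrix (Fin n) (Fin n) ℝ)
    (hDd : ∀ x, |sdist Ω x| < δ₀ → HasGradientAt (sdist Ω) (Dd x) x)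
    (hD2d : ∀ x, |sdist Ω x| < δ₀ →
      HasFDerivAt Dd (LinearMap.toContinuousLinearMap (Matrix.toEuclideanLin (D2d x))) x)
    {N δ : ℝ} (hδ₀ : δ ≤ δ₀) (hδ1 : δ ≤ 1)
    (hN : ∀ x ∈ Ω, sdist Ω x < δ → ∀ α ∈ A,
      N ≤ (sdist Ω x)⁻¹ * (⟪b x α, Dd x⟫_ℝ + Matrix.trace (σ x α * (σ x α)ᵀ * D2d x))
        - ((sdist Ω x)⁻¹)^2 * ∑ j, sigmaT (σ x α) (Dd x) j ^ 2)
    {C lam : ℝ} {v : EuclideanSpace ℝ (Fin n) → ℝ} (hv : SubP Ω A b σ C lam v)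
    (hc : ContinuousOn v Ω) {M : ℝ} (hM : ∀ x ∈ Ω, v x ≤ M)
    (hlow : ∀ x ∈ Ω, -C ≤ lam * v x)
    {h : ℝ} (hh : 0 < h) (hNC : 2 * C < h * N) {x : EuclideanSpace ℝ (Fin n)}
    (hx : x ∈ Ω) (hxδ : sdist Ω x < δ) :
    v x ≤ -(h * Real.log (sdist Ω x)) + sSup (v '' {y ∈ Ω | δ ≤ sdist Ω y}) := by
  obtain ⟨x₀, hx₀, h1, h2, h3⟩ := log_max hΩo hΩbdd hne Dd D2d hDd hD2d hδ₀ hδ1 hN hv hc hM hh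
    hx hxδ
  have h4 := Real.log_nonpos (sdist_pos hΩo hne hx₀).le h2
  have h5 : h * Real.log (sdist Ω x₀) ≤ 0 := mul_nonpos_of_nonneg_of_nonpos hh.le h4
  rcases h3 with h3 | h3
  · have hb : BddAbove (v '' {y ∈ Ω | δ ≤ sdist Ω y}) := by
      refine ⟨M, ?_⟩
      rintro _ ⟨y, hy, rfl⟩
      exact hM y hy.1
    have := le_csSup hb ⟨x₀, ⟨hx₀, h3⟩, rfl⟩
    linarith
  · linarith [hlow x₀ hx₀]

theorem statement_16
    {n m r : ℕ} (Ω : Set (EuclideanSpace ℝ (Fin n)))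
    (hΩo : IsOpen Ω) (hΩconn : IsConnected Ω) (hΩbdd : Bornology.IsBounded Ω)
    (A : Set (Fin m → ℝ)) (hA : IsClosed A) (hAne : A.Nonempty)
    (b : EuclideanSpace ℝ (Fin n) → (Fin m → ℝ) → EuclideanSpace ℝ (Fin n))
    (σ : EuclideanSpace ℝ (Fin n) → (Fin m → ℝ) → Matrix (Fin n) (Fin r) ℝ)
    (hbBdd : ∃ C, ∀ x ∈ closure Ω, ∀ α ∈ A, ‖b x α‖ ≤ C)
    (hσBdd : ∃ C, ∀ x ∈ closure Ω, ∀ α ∈ A, mnorm (σ x α) ≤ C)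
    (hbCont : ContinuousOn (fun q : EuclideanSpace ℝ (Fin n) × (Fin m → ℝ) => b q.1 q.2)
      (closure Ω ×ˢ A))
    (hσCont : ContinuousOn (fun q : EuclideanSpace ℝ (Fin n) × (Fin m → ℝ) => σ q.1 q.2)
      (closure Ω ×ˢ A))
    (l : EuclideanSpace ℝ (Fin n) → (Fin m → ℝ) → ℝ)
    (hlBdd : ∃ C, ∀ x ∈ closure Ω, ∀ α ∈ A, |l x α| ≤ C)
    (δ₀ : ℝ) (hδ₀ : 0 < δ₀)
    (Dd : EuclideanSpace ℝ (Fin n) → EuclideanSpace ℝ (Fin n))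
    (D2d : EuclideanSpace ℝ (Fin n) → Matrix (Fin n) (Fin n) ℝ)
    (hDd : ∀ x, |sdist Ω x| < δ₀ → HasGradientAt (sdist Ω) (Dd x) x)
    (hDdnorm : ∀ x, |sdist Ω x| < δ₀ → ‖Dd x‖ = 1)
    (hD2d : ∀ x, |sdist Ω x| < δ₀ →
      HasFDerivAt Dd (LinearMap.toContinuousLinearMap (Matrix.toEuclideanLin (D2d x))) x)
    (hD2dCont : ContinuousOn D2d {x | |sdist Ω x| < δ₀})
    (β B : ℝ) (hβlow : 1 / 2 < β) (hβhigh : β ≤ 1) (hB : 0 < B)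
    (hreg2 : ∀ x ∈ closure Ω, ∀ y ∈ closure Ω, ∀ α ∈ A,
      mnorm (σ x α - σ y α) ≤ B * ‖x - y‖ ^ β)
    (hinv : ∃ δ > (0 : ℝ), ∃ k > (0 : ℝ), ∃ γ : ℝ, γ < 2 * β - 1 ∧
      ∀ z ∈ frontier Ω, ∀ α ∈ A, sigmaT (σ z α) (Dd z) = 0 ∧
        ∀ x ∈ Ω, sdist Ω x < δ →
          k * sdist Ω x ^ γ ≤
            ⟪b x α, Dd x⟫_ℝ + Matrix.trace (σ x α * (σ x α)ᵀ * D2d x))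
    (hsell : ∀ x ∈ Ω, ∀ α ∈ A, (σ x α * (σ x α)ᵀ).PosDef)
    (γ₃ B₃ : ℝ) (hγ₃pos : 0 < γ₃) (hγ₃le : γ₃ ≤ 1) (hB₃ : 0 < B₃)
    (hreg3 : ∀ x ∈ closure Ω, ∀ y ∈ closure Ω, ∀ α ∈ A,
      ‖b x α - b y α‖ ≤ B₃ * ‖x - y‖ ^ γ₃ ∧ |l x α - l y α| ≤ B₃ * ‖x - y‖ ^ γ₃)
    (u : ℝ → EuclideanSpace ℝ (Fin n) → ℝ)
    (hu : ∀ lam : ℝ, 0 < lam → lam ≤ 1 →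
      ContinuousOn (u lam) Ω ∧ (∃ C, ∀ x ∈ Ω, |u lam x| ≤ C) ∧
      (∀ x ∈ Ω,
        (∀ pX ∈ J2plus Ω (u lam) x, lam * (u lam) x + Hop A b σ l x pX.1 pX.2 ≤ 0) ∧
        (∀ qZ ∈ J2minus Ω (u lam) x, 0 ≤ lam * (u lam) x + Hop A b σ l x qZ.1 qZ.2))) :
    ∀ h > (0 : ℝ), ∃ δh > (0 : ℝ), ∀ lam : ℝ, 0 < lam → lam ≤ 1 →
      ∀ x ∈ Ω, sdist Ω x < δh →
        h * Real.log (sdist Ω x) + sInf (u lam '' {y ∈ Ω | δh ≤ sdist Ω y}) ≤ u lam x ∧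
        u lam x ≤ -(h * Real.log (sdist Ω x)) + sSup (u lam '' {y ∈ Ω | δh ≤ sdist Ω y}) := by
  intro h hh
  have hne : (Ωᶜ).Nonempty := by
    rw [Set.nonempty_compl]
    rintro rfl
    obtain ⟨x, -⟩ := hΩconn.nonempty
    have h0 : sdist (Set.univ : Set (EuclideanSpace ℝ (Fin n))) x = 0 := by
      simp [sdist, Metric.infDist_zero_of_mem]
    have h1 := hDdnorm x (by rw [h0]; simpa using hδ₀)
    have hnt : Nontrivial (EuclideanSpace ℝ (Fin n)) := by
      refine ⟨Dd x, 0, fun e => ?_⟩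
      rw [e, norm_zero] at h1
      exact zero_ne_one h1
    exact NormedSpace.unbounded_univ ℝ (EuclideanSpace ℝ (Fin n)) hΩbdd
  obtain ⟨C₀, hC₀⟩ := hlBdd
  obtain ⟨δ₁, hδ₁, k, hk, γ, hγ, hI⟩ := hinv
  set N := (2 * |C₀| + 1) / h with hNdef
  have hN0 : 0 ≤ N := by positivity
  have hl : ∀ x ∈ closure Ω, ∀ α ∈ A, |l x α| ≤ |C₀| :=
    fun x hx α hα => (hC₀ x hx α hα).trans (le_abs_self _)
  have hNC : 2 * |C₀| < h * N := by
    rw [hNdef, mul_div_cancel₀ _ hh.ne']; linarith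
  obtain ⟨δ₂, hδ₂, H⟩ := aux_tend k B β γ N hk hβhigh hγ
  obtain ⟨y₁, hy₁⟩ := hΩconn.nonempty
  have hy₁p := sdist_pos hΩo hne hy₁
  obtain ⟨δ, hδ, d0, d1, d2, d3, d4⟩ : ∃ δ > (0:ℝ), δ ≤ δ₀ ∧ δ ≤ δ₁ ∧ δ ≤ δ₂ ∧ δ ≤ 1 ∧
      δ ≤ sdist Ω y₁ := by
    refine ⟨min δ₀ (min δ₁ (min δ₂ (min 1 (sdist Ω y₁)))), by positivity, ?_, ?_, ?_, ?_, ?_⟩ <;>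
      simp
  have hN : ∀ x ∈ Ω, sdist Ω x < δ → ∀ α ∈ A,
      N ≤ (sdist Ω x)⁻¹ * (⟪b x α, Dd x⟫_ℝ + Matrix.trace (σ x α * (σ x α)ᵀ * D2d x))
        - ((sdist Ω x)⁻¹)^2 * ∑ j, sigmaT (σ x α) (Dd x) j ^ 2 := by
    intro x hx hxδ α hα
    have hp := sdist_pos hΩo hne hx
    obtain ⟨z, hz, hzn, hzl⟩ := proj_exists hΩo hne hx
    obtain ⟨i1, i2⟩ := hI z hz α hα
    have i3 := i2 x hx (hxδ.trans_le d1)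
    have hz0 : sdist Ω z = 0 := by simpa using hzl 0 (by simp)
    have habsx : |sdist Ω x| < δ₀ := by rw [abs_of_pos hp]; linarith
    have habsz : |sdist Ω z| < δ₀ := by rw [hz0]; simpa using hδ₀
    have g1 := grad_eq hp hzn hzl (s := 1) (p := Dd x) (by simp) (by simpa using hDd x habsx)
      (hDdnorm x habsx)
    have g0 := grad_eq hp hzn hzl (s := 0) (p := Dd z) (by simp) (by simpa using hDd z habsz)
      (hDdnorm z habsz)
    have hDeq : Dd x = Dd z := smul_right_injective _ hp.ne' (g1.trans g0.symm)
    have hsig : ∑ j, sigmaT (σ x α) (Dd x) j ^ 2 ≤ B ^ 2 * (sdist Ω x ^ β) ^ 2 := by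
      have e : sigmaT (σ x α) (Dd x) = sigmaT (σ x α - σ z α) (Dd x) := by
        rw [sigmaT_sub, hDeq, i1, sub_zero]
      rw [e]
      refine (sigmaT_bound _ _).trans ?_
      rw [hDdnorm x habsx, one_pow, mul_one, ← mul_pow]
      have := hreg2 x (subset_closure hx) z hz.1 α hα
      rw [hzn] at this
      exact pow_le_pow_left₀ (Real.sqrt_nonneg _) this 2
    refine (H _ hp (hxδ.trans_le d2)).trans ?_
    have hi := inv_pos.2 hp
    exact sub_le_sub (mul_le_mul_of_nonneg_left i3 hi.le)
      (mul_le_mul_of_nonneg_left hsig (by positivity))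
  refine ⟨δ, hδ, fun lam hlam hlam1 x hx hxδ => ?_⟩
  obtain ⟨huc, ⟨M, hM⟩, huv⟩ := hu lam hlam hlam1
  have P1 := subP_of_sub Ω A hAne b σ hbBdd hσBdd l |C₀| hl lam (u lam) (fun x hx => (huv x hx).1)
  have P2 := subP_of_super Ω A hAne b σ l |C₀| hl lam (u lam) (fun x hx => (huv x hx).2)
  have hM1 : ∀ x ∈ Ω, u lam x ≤ M := fun x hx => (abs_le.1 (hM x hx)).2
  have hM2 : ∀ x ∈ Ω, -u lam x ≤ M := fun x hx => by linarith [(abs_le.1 (hM x hx)).1]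
  have B1 := global_bound hΩo hΩbdd hne Dd D2d hDd hD2d hδ d0 d3 hN0 hN ⟨y₁, hy₁, d4⟩ hlam P1 huc hM1
  have B2 := global_bound hΩo hΩbdd hne Dd D2d hDd hD2d hδ d0 d3 hN0 hN ⟨y₁, hy₁, d4⟩ hlam P2
    huc.neg hM2
  have U1 := upper hΩo hΩbdd hne Dd D2d hDd hD2d d0 d3 hN P1 huc hM1
    (fun x hx => by linarith [B2 x hx]) hh hNC hx hxδ
  have U2 := upper hΩo hΩbdd hne Dd D2d hDd hD2d d0 d3 hN P2 huc.neg hM2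
    (fun x hx => by linarith [B1 x hx]) hh hNC hx hxδ
  have hneg : (fun y => -u lam y) '' {y ∈ Ω | δ ≤ sdist Ω y}
      = -(u lam '' {y ∈ Ω | δ ≤ sdist Ω y}) := by
    rw [← Set.image_neg_eq_neg, Set.image_image]
  rw [hneg, Real.sSup_neg] at U2
  exact ⟨by linarith, U1⟩
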